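/- For any Moreau–Jean step, the discrete energy variation can also be written as E(q_{k+1},v_{k+1}) − E(q_k,v_k) − W_ext − W_damp = (1/2 − θ)·( ‖v_{k+1}−v_k‖²_M + ‖q_{k+1}−q_k‖²_K − P_{k+1}ᵀ(U_{k+1}−U_k) ) + P_{k+1}ᵀ U_{k+1/2}. -/

import Mathlib

open Matrix

/-!
Taking the dot product of the momentum balance with `v_θ` and using `h v_θ = q_{k+1} - q_k` gives a
work balance whose contact term is `Pᵀ U_θ`.  Since `x_θ` differs from the midpoint `x_{1/2}` by
`-(1/2 - θ) (x_{k+1} - x_k)`, the inertial, elastic and contact terms each split into their exact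
midpoint value and a defect proportional to `1/2 - θ`; by symmetry of the matrices the midpoint
values of the first two add up to the variation of the energy.
-/

namespace MoreauJean

section ThetaPoint

variable {R E : Type*} [Ring R] [AddCommGroup E] [Module R E]

/-- The point `x_{k+θ}` between `x = x_k` and `y = x_{k+1}` at which the scheme evaluates forces. It
is `AffineMap.lineMap x y θ`, written out so as to unfold to the form used in the scheme. -/
def thetaPoint (θ : R) (x y : E) : E := (1 - θ) • x + θ • y

theorem map_thetaPoint {F : Type*} [AddCommGroup F] [Module R F] (f : E →ₗ[R] F) (θ : R) (x y : E) :
    f (thetaPoint θ x y) = thetaPoint θ (f x) (f y) := by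
  simp only [thetaPoint, map_add, map_smul]

end ThetaPoint

theorem thetaPoint_eq_midpoint_sub {𝕜 E : Type*} [Field 𝕜] [NeZero (2 : 𝕜)] [AddCommGroup E]
    [Module 𝕜 E] (θ : 𝕜) (x y : E) :
    thetaPoint θ x y = (1 / 2 : 𝕜) • (x + y) - (1 / 2 - θ) • (y - x) := by
  have h2 : (2 : 𝕜) ≠ 0 := two_ne_zero
  unfold thetaPoint
  match_scalars <;> field_simp <;> ring

section SymmetricForm

variable {ι R : Type*} [Fintype ι] [CommRing R] {A : Matrix ι ι R}

theorem dotProduct_mulVec_comm_of_isSymm (hA : A.IsSymm) (x y : ι → R) :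
    x ⬝ᵥ A *ᵥ y = y ⬝ᵥ A *ᵥ x := by
  rw [← dotProduct_transpose_mulVec, hA.eq]

theorem dotProduct_mulVec_self_sub_self (hA : A.IsSymm) (x y : ι → R) :
    y ⬝ᵥ A *ᵥ y - x ⬝ᵥ A *ᵥ x = (x + y) ⬝ᵥ A *ᵥ (y - x) := by
  simp only [mulVec_sub, add_dotProduct, dotProduct_sub, dotProduct_mulVec_comm_of_isSymm hA y x]
  ring

end SymmetricForm

variable {ι κ 𝕜 : Type*} [Fintype ι] [Fintype κ] [Field 𝕜]

theorem half_dotProduct_mulVec_self_sub_self_eq_thetaPoint_add [NeZero (2 : 𝕜)] {A : Matrix ι ι 𝕜}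
    (hA : A.IsSymm) (θ : 𝕜) (x y : ι → 𝕜) :
    1 / 2 * (y ⬝ᵥ A *ᵥ y) - 1 / 2 * (x ⬝ᵥ A *ᵥ x) =
      thetaPoint θ x y ⬝ᵥ A *ᵥ (y - x) + (1 / 2 - θ) * ((y - x) ⬝ᵥ A *ᵥ (y - x)) := by
  rw [thetaPoint_eq_midpoint_sub, sub_dotProduct, smul_dotProduct, smul_dotProduct, smul_eq_mul,
    smul_eq_mul, sub_add_cancel, ← mul_sub, dotProduct_mulVec_self_sub_self hA]

/-- The total mechanical energy `E(q, v)`, for the mass matrix `M` and the stiffness matrix `K`. -/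
def mechanicalEnergy (M K : Matrix ι ι 𝕜) (q v : ι → 𝕜) : 𝕜 :=
  1 / 2 * (v ⬝ᵥ M *ᵥ v) + 1 / 2 * (q ⬝ᵥ K *ᵥ q)

/-- The discrete work `W_ext` of the external force `F = F_{k+θ}`. -/
def externalWork (h θ : 𝕜) (v v' F : ι → 𝕜) : 𝕜 :=
  h * (thetaPoint θ v v' ⬝ᵥ F)

/-- The discrete work `W_damp` of the viscous force with damping matrix `C`. -/
def dampingWork (h θ : 𝕜) (C : Matrix ι ι 𝕜) (v v' : ι → 𝕜) : 𝕜 :=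
  -(h * (thetaPoint θ v v' ⬝ᵥ C *ᵥ thetaPoint θ v v'))

/-- The equations of one step of the Moreau–Jean scheme. Primes mark the values at the end of the
step, `F` is the external force `F_{k+θ}` and `P` the contact impulse `P_{k+1}`; the contact law
relating `P` to the local velocities is not part of the notion. -/
structure IsStep (h θ : 𝕜) (M K C : Matrix ι ι 𝕜) (G : Matrix ι κ 𝕜)
    (q q' v v' F : ι → 𝕜) (P : κ → 𝕜) : Prop where
  momentum_balance : M *ᵥ (v' - v) + h • K *ᵥ thetaPoint θ q q' + h • C *ᵥ thetaPoint θ v v'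
    - h • F = G *ᵥ P
  position_update : q' = q + h • thetaPoint θ v v'

variable {h θ : 𝕜} {M K C : Matrix ι ι 𝕜} {G : Matrix ι κ 𝕜} {q q' v v' F : ι → 𝕜} {P : κ → 𝕜}

theorem IsStep.work_balance (step : IsStep h θ M K C G q q' v v' F P) :
    thetaPoint θ v v' ⬝ᵥ M *ᵥ (v' - v) + (q' - q) ⬝ᵥ K *ᵥ thetaPoint θ q q'
        - externalWork h θ v v' F - dampingWork h θ C v v' =
      P ⬝ᵥ Gᵀ *ᵥ thetaPoint θ v v' := by
  have displacement : q' - q = h • thetaPoint θ v v' := sub_eq_iff_eq_add'.mpr step.position_update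
  rw [dotProduct_transpose_mulVec, ← step.momentum_balance, displacement, externalWork, dampingWork]
  simp only [dotProduct_add, dotProduct_sub, dotProduct_smul, smul_dotProduct, smul_eq_mul]
  ring

theorem IsStep.energy_balance [NeZero (2 : 𝕜)] (hM : M.IsSymm) (hK : K.IsSymm)
    (step : IsStep h θ M K C G q q' v v' F P) :
    mechanicalEnergy M K q' v' - mechanicalEnergy M K q v
        - externalWork h θ v v' F - dampingWork h θ C v v' =
      (1 / 2 - θ) * ((v' - v) ⬝ᵥ M *ᵥ (v' - v) + (q' - q) ⬝ᵥ K *ᵥ (q' - q))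
        + P ⬝ᵥ Gᵀ *ᵥ thetaPoint θ v v' := by
  have kinetic := half_dotProduct_mulVec_self_sub_self_eq_thetaPoint_add hM θ v v'
  have elastic := half_dotProduct_mulVec_self_sub_self_eq_thetaPoint_add hK θ q q'
  rw [dotProduct_mulVec_comm_of_isSymm hK (thetaPoint θ q q')] at elastic
  unfold mechanicalEnergy
  linear_combination kinetic + elastic + step.work_balance

end MoreauJean

open MoreauJean

theorem moreau_jean_energy_alternative_form_general {ι κ 𝕜 : Type*} [Fintype ι] [Fintype κ]
    [Field 𝕜] [NeZero (2 : 𝕜)] {h θ : 𝕜} {M K C : Matrix ι ι 𝕜} {G : Matrix ι κ 𝕜}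
    {q q' v v' F : ι → 𝕜} {P : κ → 𝕜} (hM : M.IsSymm) (hK : K.IsSymm)
    (step : IsStep h θ M K C G q q' v v' F P) :
    mechanicalEnergy M K q' v' - mechanicalEnergy M K q v
        - externalWork h θ v v' F - dampingWork h θ C v v' =
      (1 / 2 - θ) * ((v' - v) ⬝ᵥ M *ᵥ (v' - v) + (q' - q) ⬝ᵥ K *ᵥ (q' - q)
          - P ⬝ᵥ (Gᵀ *ᵥ v' - Gᵀ *ᵥ v))
        + P ⬝ᵥ ((1 / 2 : 𝕜) • (Gᵀ *ᵥ v + Gᵀ *ᵥ v')) := by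
  have local_velocity : Gᵀ *ᵥ thetaPoint θ v v' =
      (1 / 2 : 𝕜) • (Gᵀ *ᵥ v + Gᵀ *ᵥ v') - (1 / 2 - θ) • (Gᵀ *ᵥ v' - Gᵀ *ᵥ v) :=
    (map_thetaPoint Gᵀ.mulVecLin θ v v').trans (thetaPoint_eq_midpoint_sub _ _ _)
  rw [step.energy_balance hM hK, local_velocity, dotProduct_sub, dotProduct_smul (1 / 2 - θ) P,
    smul_eq_mul]
  ring

/-- Alternative form of the discrete energy balance of the Moreau–Jean scheme. -/
theorem moreau_jean_energy_alternative_form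
    (n m : ℕ) (hn : 1 ≤ n) (hm : 1 ≤ m)
    (h θ : ℝ) (hh : 0 < h) (hθ0 : 0 ≤ θ) (hθ1 : θ ≤ 1)
    (M K C : Matrix (Fin n) (Fin n) ℝ) (G : Matrix (Fin n) (Fin m) ℝ)
    (hM : M.PosDef) (hK : K.PosSemidef)
    (qk qk1 vk vk1 Fθ : Fin n → ℝ) (P : Fin m → ℝ)
    (heq : M.mulVec (vk1 - vk) + h • K.mulVec ((1 - θ) • qk + θ • qk1)
        + h • C.mulVec ((1 - θ) • vk + θ • vk1) - h • Fθ = G.mulVec P)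
    (hq : qk1 = qk + h • ((1 - θ) • vk + θ • vk1)) :
    (1/2 * (vk1 ⬝ᵥ M.mulVec vk1) + 1/2 * (qk1 ⬝ᵥ K.mulVec qk1))
      - (1/2 * (vk ⬝ᵥ M.mulVec vk) + 1/2 * (qk ⬝ᵥ K.mulVec qk))
      - h * (((1 - θ) • vk + θ • vk1) ⬝ᵥ Fθ)
      - (-(h * (((1 - θ) • vk + θ • vk1) ⬝ᵥ C.mulVec ((1 - θ) • vk + θ • vk1))))
    = (1/2 - θ) * ((vk1 - vk) ⬝ᵥ M.mulVec (vk1 - vk)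
        + (qk1 - qk) ⬝ᵥ K.mulVec (qk1 - qk)
        - P ⬝ᵥ (Gᵀ.mulVec vk1 - Gᵀ.mulVec vk))
      + P ⬝ᵥ ((1/2 : ℝ) • (Gᵀ.mulVec vk + Gᵀ.mulVec vk1)) :=
  moreau_jean_energy_alternative_form_general (isHermitian_iff_isSymm.mp hM.isHermitian)
    (isHermitian_iff_isSymm.mp hK.isHermitian) ⟨heq, hq⟩
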